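/- arXiv:2309.05619 — 2 statements merged into one kernel-verified Lean document; each statement's English description precedes it below -/
import Mathlib

section
/- Suppose the pair of random parameters (Θ₁, Θ₂) is independent of (X, Y), Θ₁ and Θ₂ are independent and identically distributed, and the ensemble is class-wise calibrated, i.e. for every class k ∈ K the conditional expectation E[1{Y = k} | p_k(X)] = p_k(X) almost surely, where p_k(x) = ℙ[c(Θ₁, x) = k]. Then the expected disagreement equals the expected test error: ℙ[c(Θ₁, X) ≠ c(Θ₂, X)] = ℙ[c(Θ₁, X) ≠ Y]. -/
open MeasureTheory ProbabilityTheory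

/-!
Both sides are complements of events that split over the classes. Given `X`, the two independent
classifiers both predict `k` with probability `p_k(X) ^ 2`; given `(X, Y)`, the first classifier
correctly predicts `k` with probability `p_k(X) * 1{Y = k}`. Taking out what is known, calibration
turns `𝔼[p_k(X) * 1{Y = k}]` into `𝔼[p_k(X) ^ 2]`, so agreement and correctness have the same
probability class by class.
-/

section Independence

variable {Ω α β γ : Type*} [MeasurableSpace Ω] [MeasurableSpace α] [MeasurableSpace β]
  [MeasurableSpace γ] {μ : Measure Ω} [IsFiniteMeasure μ]

lemma measure_prodMk_mem_eq_lintegral_of_indepFun {U : Ω → α} {V : Ω → β}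
    (hU : AEMeasurable U μ) (hV : AEMeasurable V μ) (hUV : IndepFun U V μ)
    {S : Set (α × β)} (hS : MeasurableSet S) :
    μ {ω | (U ω, V ω) ∈ S} = ∫⁻ ω, μ {ω' | (U ω', V ω) ∈ S} ∂μ :=
  calc μ {ω | (U ω, V ω) ∈ S}
      = (μ.map U).prod (μ.map V) S := by
        rw [← hUV.map_prod_eq_prod_map_map hU hV,
          Measure.map_apply_of_aemeasurable (hU.prodMk hV) hS]
        rfl
    _ = ∫⁻ ω, μ.map U {u | (u, V ω) ∈ S} ∂μ := by
        rw [Measure.prod_apply_symm hS,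
          lintegral_map' (measurable_measure_prodMk_right hS).aemeasurable hV]
        rfl
    _ = ∫⁻ ω, μ {ω' | (U ω', V ω) ∈ S} ∂μ :=
        lintegral_congr fun _ ↦ Measure.map_apply_of_aemeasurable hU (measurable_prodMk_right hS)

lemma measure_prodMk_mem_and_mem_eq_setLIntegral {T : Ω → α} {X : Ω → β} {Y : Ω → γ}
    (hT : AEMeasurable T μ) (hX : AEMeasurable X μ) (hY : AEMeasurable Y μ)
    (hTXY : IndepFun T (fun ω ↦ (X ω, Y ω)) μ)
    {S : Set (α × β)} (hS : MeasurableSet S) {B : Set γ} (hB : MeasurableSet B) :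
    μ {ω | (T ω, X ω) ∈ S ∧ Y ω ∈ B} = ∫⁻ ω in Y ⁻¹' B, μ {ω' | (T ω', X ω) ∈ S} ∂μ := by
  have hSB : MeasurableSet {z : α × β × γ | (z.1, z.2.1) ∈ S ∧ z.2.2 ∈ B} :=
    (measurableSet_preimage (by fun_prop) hS).inter (measurableSet_preimage (by fun_prop) hB)
  rw [← lintegral_indicator₀ (hY.nullMeasurableSet_preimage hB)]
  refine (measure_prodMk_mem_eq_lintegral_of_indepFun hT (hX.prodMk hY) hTXY hSB).trans
    (lintegral_congr fun ω ↦ ?_)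
  by_cases hω : Y ω ∈ B <;> simp [hω]

lemma measure_prodMk_mem_and_prodMk_mem_eq_lintegral_mul {T₁ : Ω → α} {T₂ : Ω → β} {X : Ω → γ}
    (hT₁ : AEMeasurable T₁ μ) (hT₂ : AEMeasurable T₂ μ) (hX : AEMeasurable X μ)
    (hTX : IndepFun (fun ω ↦ (T₁ ω, T₂ ω)) X μ) (hTT : IndepFun T₁ T₂ μ)
    {S₁ : Set (α × γ)} (hS₁ : MeasurableSet S₁) {S₂ : Set (β × γ)} (hS₂ : MeasurableSet S₂) :
    μ {ω | (T₁ ω, X ω) ∈ S₁ ∧ (T₂ ω, X ω) ∈ S₂} =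
      ∫⁻ ω, μ {ω' | (T₁ ω', X ω) ∈ S₁} * μ {ω' | (T₂ ω', X ω) ∈ S₂} ∂μ := by
  have hS : MeasurableSet {z : (α × β) × γ | (z.1.1, z.2) ∈ S₁ ∧ (z.1.2, z.2) ∈ S₂} :=
    (measurableSet_preimage (by fun_prop) hS₁).inter (measurableSet_preimage (by fun_prop) hS₂)
  refine (measure_prodMk_mem_eq_lintegral_of_indepFun (hT₁.prodMk hT₂) hX hTX hS).trans
    (lintegral_congr fun ω ↦ ?_)
  exact hTT.measure_inter_preimage_eq_mul _ _
    (measurable_prodMk_right hS₁) (measurable_prodMk_right hS₂)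

end Independence

section Agreement

variable {Ω K : Type*} [MeasurableSpace Ω] [MeasurableSpace K] [MeasurableSingletonClass K]
  [Countable K] {μ : Measure Ω} {f g f' g' : Ω → K}

lemma measure_eq_fun_eq_tsum (hf : AEMeasurable f μ) (hg : AEMeasurable g μ) :
    μ {ω | f ω = g ω} = ∑' k, μ {ω | f ω = k ∧ g ω = k} := by
  have agree_eq_iUnion : {ω | f ω = g ω} = ⋃ k, {ω | f ω = k ∧ g ω = k} := by
    ext ω
    simp [eq_comm]
  rw [agree_eq_iUnion]
  refine measure_iUnion₀ (fun i j hij ↦ Disjoint.aedisjoint ?_) fun k ↦ ?_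
  · exact Set.disjoint_left.2 fun ω hi hj ↦ hij (hi.1.symm.trans hj.1)
  · exact (hf.nullMeasurableSet_preimage (measurableSet_singleton k)).inter
      (hg.nullMeasurableSet_preimage (measurableSet_singleton k))

lemma measure_ne_fun_eq_of_forall_measure_eq [IsFiniteMeasure μ]
    (hf : AEMeasurable f μ) (hg : AEMeasurable g μ)
    (hf' : AEMeasurable f' μ) (hg' : AEMeasurable g' μ)
    (h : ∀ k, μ {ω | f ω = k ∧ g ω = k} = μ {ω | f' ω = k ∧ g' ω = k}) :
    μ {ω | f ω ≠ g ω} = μ {ω | f' ω ≠ g' ω} := by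
  have measure_agree_eq : μ {ω | f ω = g ω} = μ {ω | f' ω = g' ω} := by
    simp only [measure_eq_fun_eq_tsum, hf, hg, hf', hg', h]
  calc μ {ω | f ω = g ω}ᶜ
      = μ Set.univ - μ {ω | f ω = g ω} :=
        measure_compl₀ (nullMeasurableSet_eq_fun hf hg) (measure_ne_top _ _)
    _ = μ Set.univ - μ {ω | f' ω = g' ω} := by rw [measure_agree_eq]
    _ = μ {ω | f' ω = g' ω}ᶜ :=
        (measure_compl₀ (nullMeasurableSet_eq_fun hf' hg') (measure_ne_top _ _)).symm

end Agreement

section Calibration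

variable {Ω : Type*} [MeasurableSpace Ω] {μ : Measure Ω} {q : Ω → ℝ} {A : Set Ω}

/-- The random forecast `q` of the event `A` is calibrated: given the value of `q`, the event `A`
has conditional probability `q`. Conditioning on `q` means conditioning on the σ-algebra it
generates. -/
def IsCalibrated (μ : Measure Ω) (q : Ω → ℝ) (A : Set Ω) : Prop :=
  μ⟦A | MeasurableSpace.comap q inferInstance⟧ =ᵐ[μ] q

lemma isCalibrated_setOf_iff {P : Ω → Prop} [DecidablePred P] :
    IsCalibrated μ q {ω | P ω} ↔
      μ[fun ω ↦ if P ω then (1 : ℝ) else 0 | MeasurableSpace.comap q inferInstance] =ᵐ[μ] q := by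
  have indicator_eq_ite : {ω | P ω}.indicator (fun _ ↦ (1 : ℝ)) = fun ω ↦ if P ω then 1 else 0 := by
    ext ω
    by_cases hω : P ω <;> simp [hω]
  rw [IsCalibrated, indicator_eq_ite]

namespace IsCalibrated

lemma integrable (h : IsCalibrated μ q A) : Integrable q μ :=
  integrable_condExp.congr h

lemma ae_nonneg (h : IsCalibrated μ q A) : 0 ≤ᵐ[μ] q :=
  (condExp_nonneg (.of_forall (Set.indicator_nonneg fun _ _ ↦ zero_le_one))).trans_eq h

variable [IsFiniteMeasure μ]

lemma condExp_indicator_ae_eq_sq (h : IsCalibrated μ q A) (hA : MeasurableSet A) :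
    μ[A.indicator q | MeasurableSpace.comap q inferInstance] =ᵐ[μ] fun ω ↦ q ω ^ 2 := by
  have indicator_eq_mul : A.indicator q = q * A.indicator fun _ ↦ (1 : ℝ) := by
    simp [← Set.indicator_mul_right, Pi.mul_def]
  have pull_out := condExp_mul_of_stronglyMeasurable_left (μ := μ)
    (comap_measurable q).stronglyMeasurable
    (indicator_eq_mul ▸ h.integrable.indicator hA) ((integrable_const 1).indicator hA)
  rw [indicator_eq_mul]
  filter_upwards [pull_out, h] with ω hpull hq
  rw [hpull, Pi.mul_apply, hq, sq]

lemma lintegral_ofReal_sq (h : IsCalibrated μ q A) (hq : Measurable q) (hA : MeasurableSet A) :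
    ∫⁻ ω, ENNReal.ofReal (q ω ^ 2) ∂μ = ∫⁻ ω in A, ENNReal.ofReal (q ω) ∂μ := by
  have condExp_eq_sq := h.condExp_indicator_ae_eq_sq hA
  have integral_sq : ∫ ω, q ω ^ 2 ∂μ = ∫ ω in A, q ω ∂μ := by
    rw [← integral_congr_ae condExp_eq_sq, integral_condExp hq.comap_le, integral_indicator hA]
  rw [← ofReal_integral_eq_lintegral_ofReal (integrable_condExp.congr condExp_eq_sq)
      (.of_forall fun _ ↦ sq_nonneg _), integral_sq,
    ofReal_integral_eq_lintegral_ofReal h.integrable.integrableOn (ae_restrict_of_ae h.ae_nonneg)]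

end IsCalibrated

end Calibration

section Ensemble

variable {Ω 𝒳 Θ K : Type*} [MeasurableSpace Ω] {μ : Measure Ω} {X : Ω → 𝒳} {Y : Ω → K}
  {c : Θ × 𝒳 → K} {T T₁ T₂ : Ω → Θ}

/-- The ensemble probability `p_k(x)`: the probability that the classifier `c` with random parameter
`T` assigns the class `k` to the point `x`. -/
def ensembleProb (μ : Measure Ω) (c : Θ × 𝒳 → K) (T : Ω → Θ) (k : K) (x : 𝒳) : ℝ :=
  μ.real {ω | c (T ω, x) = k}

lemma ensembleProb_nonneg (k : K) (x : 𝒳) : 0 ≤ ensembleProb μ c T k x :=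
  measureReal_nonneg

lemma ofReal_ensembleProb [IsFiniteMeasure μ] (k : K) (x : 𝒳) :
    ENNReal.ofReal (ensembleProb μ c T k x) = μ {ω | c (T ω, x) = k} :=
  ofReal_measureReal

variable [MeasurableSpace 𝒳] [MeasurableSpace Θ] [MeasurableSpace K] [MeasurableSingletonClass K]

lemma ensembleProb_eq_of_identDistrib (hc : Measurable c) (hId : IdentDistrib T₁ T₂ μ μ) :
    ensembleProb μ c T₁ = ensembleProb μ c T₂ := by
  ext k x
  have hS : MeasurableSet {t | c (t, x) = k} :=
    measurableSet_preimage (hc.comp measurable_prodMk_right) (measurableSet_singleton k)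
  exact congrArg ENNReal.toReal (hId.measure_mem_eq hS)

variable [IsFiniteMeasure μ]

lemma measurable_ensembleProb (hc : Measurable c) (hT : AEMeasurable T μ) (k : K) :
    Measurable (ensembleProb μ c T k) := by
  have hS : MeasurableSet (c ⁻¹' {k}) := hc (measurableSet_singleton k)
  have eq_map : ensembleProb μ c T k = fun x ↦ (μ.map T {t | (t, x) ∈ c ⁻¹' {k}}).toReal :=
    funext fun x ↦ congrArg ENNReal.toReal
      (Measure.map_apply_of_aemeasurable hT (measurable_prodMk_right hS)).symm
  rw [eq_map]
  exact (measurable_measure_prodMk_right hS).ennreal_toReal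

lemma measure_predict_and_predict_eq_lintegral_sq (hX : AEMeasurable X μ) (hc : Measurable c)
    (hTX : IndepFun (fun ω ↦ (T₁ ω, T₂ ω)) X μ) (hTT : IndepFun T₁ T₂ μ)
    (hId : IdentDistrib T₁ T₂ μ μ) (k : K) :
    μ {ω | c (T₁ ω, X ω) = k ∧ c (T₂ ω, X ω) = k} =
      ∫⁻ ω, ENNReal.ofReal (ensembleProb μ c T₁ k (X ω) ^ 2) ∂μ := by
  have hS : MeasurableSet (c ⁻¹' {k}) := hc (measurableSet_singleton k)
  refine (measure_prodMk_mem_and_prodMk_mem_eq_lintegral_mul hId.aemeasurable_fst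
    hId.aemeasurable_snd hX hTX hTT hS hS).trans (lintegral_congr fun ω ↦ ?_)
  calc μ {ω' | c (T₁ ω', X ω) = k} * μ {ω' | c (T₂ ω', X ω) = k}
      = ENNReal.ofReal (ensembleProb μ c T₁ k (X ω)) *
          ENNReal.ofReal (ensembleProb μ c T₂ k (X ω)) := by
        simp only [ofReal_ensembleProb]
    _ = ENNReal.ofReal (ensembleProb μ c T₁ k (X ω) ^ 2) := by
        rw [← ensembleProb_eq_of_identDistrib hc hId, sq,
          ENNReal.ofReal_mul (ensembleProb_nonneg k (X ω))]

lemma measure_predict_and_label_eq_setLIntegral (hX : AEMeasurable X μ) (hY : AEMeasurable Y μ)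
    (hc : Measurable c) (hT : AEMeasurable T μ) (hTXY : IndepFun T (fun ω ↦ (X ω, Y ω)) μ) (k : K) :
    μ {ω | c (T ω, X ω) = k ∧ Y ω = k} =
      ∫⁻ ω in Y ⁻¹' {k}, ENNReal.ofReal (ensembleProb μ c T k (X ω)) ∂μ := by
  simpa [ofReal_ensembleProb] using measure_prodMk_mem_and_mem_eq_setLIntegral hT hX hY hTXY
    (hc (measurableSet_singleton k)) (measurableSet_singleton k)

theorem expected_disagreement_eq_expected_test_error_general [Countable K]
    (hX : Measurable X) (hY : Measurable Y) (hc : Measurable c)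
    (hTX : IndepFun (fun ω ↦ (T₁ ω, T₂ ω)) X μ) (hTXY : IndepFun T₁ (fun ω ↦ (X ω, Y ω)) μ)
    (hTT : IndepFun T₁ T₂ μ) (hId : IdentDistrib T₁ T₂ μ μ)
    (hCal : ∀ k, IsCalibrated μ (fun ω ↦ ensembleProb μ c T₁ k (X ω)) (Y ⁻¹' {k})) :
    μ {ω | c (T₁ ω, X ω) ≠ c (T₂ ω, X ω)} = μ {ω | c (T₁ ω, X ω) ≠ Y ω} := by
  have hT₁ := hId.aemeasurable_fst
  have hc₁ : AEMeasurable (fun ω ↦ c (T₁ ω, X ω)) μ :=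
    hc.comp_aemeasurable (hT₁.prodMk hX.aemeasurable)
  have hc₂ : AEMeasurable (fun ω ↦ c (T₂ ω, X ω)) μ :=
    hc.comp_aemeasurable (hId.aemeasurable_snd.prodMk hX.aemeasurable)
  refine measure_ne_fun_eq_of_forall_measure_eq hc₁ hc₂ hc₁ hY.aemeasurable fun k ↦ ?_
  calc μ {ω | c (T₁ ω, X ω) = k ∧ c (T₂ ω, X ω) = k}
      = ∫⁻ ω, ENNReal.ofReal (ensembleProb μ c T₁ k (X ω) ^ 2) ∂μ :=
        measure_predict_and_predict_eq_lintegral_sq hX.aemeasurable hc hTX hTT hId k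
    _ = ∫⁻ ω in Y ⁻¹' {k}, ENNReal.ofReal (ensembleProb μ c T₁ k (X ω)) ∂μ :=
        (hCal k).lintegral_ofReal_sq ((measurable_ensembleProb hc hT₁ k).comp hX)
          (hY (measurableSet_singleton k))
    _ = μ {ω | c (T₁ ω, X ω) = k ∧ Y ω = k} :=
        (measure_predict_and_label_eq_setLIntegral hX.aemeasurable hY.aemeasurable hc hT₁ hTXY
          k).symm

end Ensemble

/-- Theorem 1 of Jiang et al.: if the pair of random parameters `(Θ₁, Θ₂)` is independent
of `(X, Y)`, `Θ₁` and `Θ₂` are i.i.d., and the ensemble is class-wise calibrated, then the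
expected disagreement equals the expected test error. -/
theorem expected_disagreement_eq_expected_test_error
    {Ω 𝒳 Θ K : Type*} [MeasurableSpace Ω] [MeasurableSpace 𝒳] [MeasurableSpace Θ]
    [MeasurableSpace K] [MeasurableSingletonClass K] [Fintype K] [Nonempty K] [DecidableEq K]
    (μ : Measure Ω) [IsProbabilityMeasure μ]
    (X : Ω → 𝒳) (Y : Ω → K) (c : Θ × 𝒳 → K) (T₁ T₂ : Ω → Θ)
    (hX : Measurable X) (hY : Measurable Y) (hc : Measurable c)
    (hT₁ : Measurable T₁) (hT₂ : Measurable T₂)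
    (p : K → 𝒳 → ℝ)
    (hp : ∀ k x, p k x = (μ {ω | c (T₁ ω, x) = k}).toReal)
    -- (Θ₁, Θ₂) is independent of (X, Y)
    (hIndep : IndepFun (fun ω => (T₁ ω, T₂ ω)) (fun ω => (X ω, Y ω)) μ)
    -- Θ₁ and Θ₂ are independent
    (hTT : IndepFun T₁ T₂ μ)
    -- Θ₁ and Θ₂ are identically distributed
    (hId : IdentDistrib T₁ T₂ μ μ)
    -- class-wise calibration: E[1{Y = k} | p_k(X)] = p_k(X) a.s. for every class k
    (hCal : ∀ k : K,
      μ[(fun ω => if Y ω = k then (1 : ℝ) else 0) |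
        MeasurableSpace.comap (fun ω => p k (X ω)) inferInstance]
        =ᵐ[μ] fun ω => p k (X ω)) :
    μ {ω | c (T₁ ω, X ω) ≠ c (T₂ ω, X ω)} = μ {ω | c (T₁ ω, X ω) ≠ Y ω} := by
  obtain rfl : p = ensembleProb μ c T₁ := funext₂ hp
  exact expected_disagreement_eq_expected_test_error_general hX hY hc
    (hIndep.comp measurable_id measurable_fst) (hIndep.comp measurable_fst measurable_id)
    hTT hId fun k ↦ isCalibrated_setOf_iff.2 (hCal k)
end

section
/- If the random parameter Θ₁ is independent of the pair (X, Y), then the expected test error satisfies ℙ[c(Θ₁, X) ≠ Y] = 1 − Σ_{k ∈ K} E[1{Y = k} · p_k(X)], where p_k(x) = ℙ[c(Θ₁, x) = k]. -/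
open MeasureTheory ProbabilityTheory

/-!
The event `c (Θ₁, X) = Y` is the disjoint union over `k` of the events `c (Θ₁, X) = k ∧ Y = k`.
Since `Θ₁` is independent of `(X, Y)`, the probability of each of them can be computed by freezing
`(X, Y)` and averaging over `Θ₁` first, which gives `E[1{Y = k} · p k (X)]`.
-/

section Freezing

variable {Ω 𝒳 𝒴 Θ : Type*} [MeasurableSpace Ω] [MeasurableSpace 𝒳] [MeasurableSpace 𝒴]
  [MeasurableSpace Θ] {μ : Measure Ω} {T : Ω → Θ} {X : Ω → 𝒳} {Y : Ω → 𝒴}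
  {A : Set (Θ × 𝒳)} {B : Set 𝒴}

lemma aemeasurable_measure_prodMk_mem [SFinite μ] (hT : AEMeasurable T μ)
    (hX : AEMeasurable X μ) (hA : MeasurableSet A) :
    AEMeasurable (fun ω ↦ μ {ω' | (T ω', X ω) ∈ A}) μ :=
  ((measurable_measure_prodMk_right (μ := μ.map T) hA).comp_aemeasurable hX).congr <|
    .of_forall fun _ ↦ Measure.map_apply_of_aemeasurable hT (measurable_prodMk_right hA)

lemma measure_prodMk_mem_eq_lintegral_of_indepFun_s2 [IsFiniteMeasure μ] (hT : AEMeasurable T μ)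
    (hX : AEMeasurable X μ) (hIndep : IndepFun T X μ) (hA : MeasurableSet A) :
    μ {ω | (T ω, X ω) ∈ A} = ∫⁻ ω, μ {ω' | (T ω', X ω) ∈ A} ∂μ :=
  calc μ {ω | (T ω, X ω) ∈ A}
      = μ.map (fun ω ↦ (T ω, X ω)) A :=
        (Measure.map_apply_of_aemeasurable (hT.prodMk hX) hA).symm
    _ = ((μ.map T).prod (μ.map X)) A := by
        rw [(indepFun_iff_map_prod_eq_prod_map_map hT hX).1 hIndep]
    _ = ∫⁻ ω, μ.map T ((fun t ↦ (t, X ω)) ⁻¹' A) ∂μ := by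
        rw [Measure.prod_apply_symm hA,
          lintegral_map' (measurable_measure_prodMk_right hA).aemeasurable hX]
    _ = ∫⁻ ω, μ {ω' | (T ω', X ω) ∈ A} ∂μ :=
        lintegral_congr fun _ ↦
          Measure.map_apply_of_aemeasurable hT (measurable_prodMk_right hA)

lemma measureReal_prodMk_mem_eq_integral_of_indepFun [IsFiniteMeasure μ]
    (hT : AEMeasurable T μ) (hX : AEMeasurable X μ) (hIndep : IndepFun T X μ)
    (hA : MeasurableSet A) :
    μ.real {ω | (T ω, X ω) ∈ A} = ∫ ω, μ.real {ω' | (T ω', X ω) ∈ A} ∂μ := by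
  simp_rw [measureReal_def]
  rw [integral_toReal (aemeasurable_measure_prodMk_mem hT hX hA)
      (.of_forall fun _ ↦ measure_lt_top _ _),
    measure_prodMk_mem_eq_lintegral_of_indepFun_s2 hT hX hIndep hA]

lemma measureReal_prodMk_mem_inter_preimage_eq_setIntegral_of_indepFun [IsFiniteMeasure μ]
    (hT : AEMeasurable T μ) (hX : AEMeasurable X μ) (hY : AEMeasurable Y μ)
    (hIndep : IndepFun T (fun ω ↦ (X ω, Y ω)) μ) (hA : MeasurableSet A) (hB : MeasurableSet B) :
    μ.real ({ω | (T ω, X ω) ∈ A} ∩ Y ⁻¹' B) =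
      ∫ ω in Y ⁻¹' B, μ.real {ω' | (T ω', X ω) ∈ A} ∂μ := by
  have hAB : MeasurableSet {q : Θ × 𝒳 × 𝒴 | (q.1, q.2.1) ∈ A ∧ q.2.2 ∈ B} :=
    ((measurable_fst.prodMk measurable_snd.fst) hA).inter (measurable_snd.snd hB)
  calc μ.real ({ω | (T ω, X ω) ∈ A} ∩ Y ⁻¹' B)
      = ∫ ω, μ.real {ω' | (T ω', X ω) ∈ A ∧ Y ω ∈ B} ∂μ :=
        measureReal_prodMk_mem_eq_integral_of_indepFun hT (hX.prodMk hY) hIndep hAB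
    _ = ∫ ω, (Y ⁻¹' B).indicator (fun ω ↦ μ.real {ω' | (T ω', X ω) ∈ A}) ω ∂μ := by
        congr 1 with ω
        by_cases hω : Y ω ∈ B <;> simp [hω]
    _ = ∫ ω in Y ⁻¹' B, μ.real {ω' | (T ω', X ω) ∈ A} ∂μ :=
        integral_indicator₀ (hY.nullMeasurableSet_preimage hB)

end Freezing

section Fibers

variable {Ω K : Type*} [MeasurableSpace Ω] [MeasurableSpace K] [MeasurableSingletonClass K]
  {μ : Measure Ω} {Y : Ω → K}

lemma integral_ite_eq_mul_eq_setIntegral [DecidableEq K] (hY : AEMeasurable Y μ) (k : K)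
    (f : Ω → ℝ) :
    ∫ ω, (if Y ω = k then (1 : ℝ) else 0) * f ω ∂μ = ∫ ω in Y ⁻¹' {k}, f ω ∂μ := by
  rw [← integral_indicator₀ (hY.nullMeasurableSet_preimage (measurableSet_singleton k))]
  congr 1 with ω
  by_cases hω : Y ω = k <;> simp [hω]

lemma hasSum_measureReal_inter_preimage_singleton [Countable K] {s : Set Ω}
    (hY : AEMeasurable Y (μ.restrict s)) (hs : μ s ≠ ⊤) :
    HasSum (fun k ↦ μ.real (s ∩ Y ⁻¹' {k})) (μ.real s) := by
  have hfiber (k : K) : NullMeasurableSet (Y ⁻¹' {k}) (μ.restrict s) :=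
    hY.nullMeasurableSet_preimage (measurableSet_singleton k)
  have hsum : ∑' k, μ (s ∩ Y ⁻¹' {k}) = μ s :=
    calc ∑' k, μ (s ∩ Y ⁻¹' {k})
        = ∑' k, μ.restrict s (Y ⁻¹' {k}) := by
          simp_rw [Measure.restrict_apply₀ (hfiber _), Set.inter_comm]
      _ = μ.restrict s (⋃ k, Y ⁻¹' {k}) :=
          (measure_iUnion₀ ((pairwise_disjoint_fiber Y).mono fun _ _ h ↦ h.aedisjoint)
            hfiber).symm
      _ = μ s := by
          rw [← Set.preimage_iUnion, Set.iUnion_of_singleton, Set.preimage_univ,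
            Measure.restrict_apply_univ]
  rw [measureReal_def, ← hsum,
    ENNReal.tsum_toReal_eq fun _ ↦ measure_ne_top_of_subset Set.inter_subset_left hs]
  exact ENNReal.hasSum_toReal (hsum.trans_ne hs)

end Fibers

theorem expected_test_error_eq_one_sub_sum_general
    {Ω 𝒳 Θ K : Type*} [MeasurableSpace Ω] [MeasurableSpace 𝒳] [MeasurableSpace Θ]
    [MeasurableSpace K] [MeasurableSingletonClass K] [Countable K] [DecidableEq K]
    (μ : Measure Ω) [IsProbabilityMeasure μ]
    (X : Ω → 𝒳) (Y : Ω → K) (c : Θ × 𝒳 → K) (T₁ : Ω → Θ)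
    (hX : AEMeasurable X μ) (hY : AEMeasurable Y μ) (hc : Measurable c)
    (hT₁ : AEMeasurable T₁ μ) (p : K → 𝒳 → ℝ)
    (hp : ∀ k x, p k x = μ.real {ω | c (T₁ ω, x) = k})
    (hIndep : IndepFun T₁ (fun ω ↦ (X ω, Y ω)) μ) :
    HasSum (fun k ↦ ∫ ω, (if Y ω = k then (1 : ℝ) else 0) * p k (X ω) ∂μ)
      (1 - μ.real {ω | c (T₁ ω, X ω) ≠ Y ω}) := by
  have hcorrect : NullMeasurableSet {ω | c (T₁ ω, X ω) = Y ω} μ :=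
    nullMeasurableSet_eq_fun (hc.comp_aemeasurable (hT₁.prodMk hX)) hY
  have haccuracy : 1 - μ.real {ω | c (T₁ ω, X ω) ≠ Y ω} = μ.real {ω | c (T₁ ω, X ω) = Y ω} :=
    sub_eq_of_eq_add' (sub_eq_iff_eq_add.1 (probReal_compl_eq_one_sub₀ hcorrect).symm)
  have hclass (k : K) : ∫ ω, (if Y ω = k then (1 : ℝ) else 0) * p k (X ω) ∂μ =
      μ.real ({ω | c (T₁ ω, X ω) = Y ω} ∩ Y ⁻¹' {k}) := by
    have hk : MeasurableSet {k} := measurableSet_singleton k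
    have hinter : {ω | c (T₁ ω, X ω) = Y ω} ∩ Y ⁻¹' {k} =
        {ω | (T₁ ω, X ω) ∈ c ⁻¹' {k}} ∩ Y ⁻¹' {k} :=
      Set.ext fun ω ↦ and_congr_left fun (hω : Y ω = k) ↦ by simp [hω]
    rw [integral_ite_eq_mul_eq_setIntegral hY, hinter,
      measureReal_prodMk_mem_inter_preimage_eq_setIntegral_of_indepFun hT₁ hX hY hIndep
        (hc hk) hk]
    simp_rw [hp, Set.mem_preimage, Set.mem_singleton_iff]
  simp_rw [haccuracy, hclass]
  exact hasSum_measureReal_inter_preimage_singleton hY.restrict (measure_ne_top μ _)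

/-- If the random parameter `Θ₁` is independent of the pair `(X, Y)`, then the expected
test error satisfies `ℙ[c(Θ₁, X) ≠ Y] = 1 - ∑ k, E[1{Y = k} · p k (X)]`. -/
theorem expected_test_error_eq_one_sub_sum
    {Ω 𝒳 Θ K : Type*} [MeasurableSpace Ω] [MeasurableSpace 𝒳] [MeasurableSpace Θ]
    [MeasurableSpace K] [MeasurableSingletonClass K] [Fintype K] [Nonempty K] [DecidableEq K]
    (μ : Measure Ω) [IsProbabilityMeasure μ]
    (X : Ω → 𝒳) (Y : Ω → K) (c : Θ × 𝒳 → K) (T₁ : Ω → Θ)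
    (hX : Measurable X) (hY : Measurable Y) (hc : Measurable c) (hT₁ : Measurable T₁)
    (p : K → 𝒳 → ℝ)
    (hp : ∀ k x, p k x = (μ {ω | c (T₁ ω, x) = k}).toReal)
    -- Θ₁ is independent of (X, Y)
    (hIndep : IndepFun T₁ (fun ω => (X ω, Y ω)) μ) :
    (μ {ω | c (T₁ ω, X ω) ≠ Y ω}).toReal =
      1 - ∑ k : K, ∫ ω, (if Y ω = k then (1 : ℝ) else 0) * p k (X ω) ∂μ := by
  rw [← (expected_test_error_eq_one_sub_sum_general μ X Y c T₁ hX.aemeasurable hY.aemeasurable hc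
    hT₁.aemeasurable p hp hIndep).unique (hasSum_fintype _), sub_sub_cancel, measureReal_def]
end
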